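/- Let q be a power of an odd prime, let φ, C_{a,α} (a ∈ 𝔽_q ∪ {y}) be as in the context, let V be the (2q+3)×(2q+3) cyclic shift permutation matrix, let ψ : 𝔽_q ∪ {y} → {1, 2, …, q+1} be any bijection, and for α ∈ 𝔽_q put N_α = Σ_{a ∈ 𝔽_q ∪ {y}} (V^{ψ(a)} + V^{−ψ(a)}) ⊗ C_{a,α}, a (2q+3)q² × (2q+3)q² (0,1)-matrix. Then: (1) N_0 is the adjacency matrix of a Deza graph with parameters (q²(2q+3), 2q²+2q, 3q, 2q), i.e., N_0 is symmetric with zero diagonal, N_0·J = (2q²+2q)·J, and N_0² = 2q·X + 3q·Y + (2q²+2q)·I for some (0,1)-matrices X, Y with X + Y + I = J; and (2) for every α ∈ 𝔽_q with α ≠ 0, N_α is the adjacency matrix of a directed (q²(2q+3), 2q²+2q, 3q, 2q)-Deza graph of type II, i.e., N_α·J = J·N_α = (2q²+2q)·J and N_α·N_αᵀ = N_αᵀ·N_α = 2q·X + 3q·Y + (2q²+2q)·I for some (0,1)-matrices X, Y with X + Y + I = J. -/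

import Mathlib

open Matrix Kronecker

/-- The all-ones square matrix over ℤ. -/
def allOnes (ι : Type*) : Matrix ι ι ℤ := Matrix.of fun _ _ => 1

/-- A (0,1)-matrix. -/
def IsZeroOne {ι κ : Type*} (M : Matrix ι κ ℤ) : Prop := ∀ i j, M i j = 0 ∨ M i j = 1

/-- The regular permutation representation of the additive group of `F`:
`phiMat F x` has (u,v)-entry 1 iff u = v + x. -/
def phiMat (F : Type*) [AddGroup F] [DecidableEq F] (x : F) : Matrix F F ℤ :=
  Matrix.of fun u v => if u = v + x then 1 else 0

/-- The auxiliary matrix C_{α,α'}: the q²×q² block matrix whose (β,β')-block is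
φ(α(β'−β) + α'). -/
def Cmat (F : Type*) [Field F] [DecidableEq F] (α α' : F) :
    Matrix (F × F) (F × F) ℤ :=
  Matrix.of fun p p' => phiMat F (α * (p'.1 - p.1) + α') p.2 p'.2

/-- The auxiliary matrix C_{y,α} = φ(α) ⊗ J_q. -/
def CyMat (F : Type*) [Field F] [Fintype F] [DecidableEq F] (α : F) :
    Matrix (F × F) (F × F) ℤ :=
  phiMat F α ⊗ₖ allOnes F

/-- The family C_{a,α} for a ∈ 𝔽_q ∪ {y}, where `none` plays the role of y. -/
def Cext (F : Type*) [Field F] [Fintype F] [DecidableEq F] :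
    Option F → F → Matrix (F × F) (F × F) ℤ
  | some γ, α => Cmat F γ α
  | none, α => CyMat F α

/-- The m×m cyclic shift permutation matrix: (i,j)-entry 1 iff j ≡ i+1 (mod m). -/
def shiftV (m : ℕ) : Matrix (Fin m) (Fin m) ℤ :=
  Matrix.of fun i j => if (j : ℕ) = ((i : ℕ) + 1) % m then 1 else 0

/-- N_α = Σ_{a ∈ 𝔽_q ∪ {y}} (V^{ψ(a)} + V^{−ψ(a)}) ⊗ C_{a,α}. -/
def Nmat (F : Type*) [Field F] [Fintype F] [DecidableEq F]
    (ψ : Option F → ℕ) (α : F) :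
    Matrix (Fin (2 * Fintype.card F + 3) × (F × F))
      (Fin (2 * Fintype.card F + 3) × (F × F)) ℤ :=
  ∑ a : Option F,
    (shiftV (2 * Fintype.card F + 3) ^ ψ a +
      (shiftV (2 * Fintype.card F + 3))ᵀ ^ ψ a) ⊗ₖ Cext F a α

/-! Each `C_{a,α}` is the relation `L_a (p - p') = α` on `𝔽_q²`, where the `L_a` are linear
functionals, one for each point of the projective line. Two functionals with different `a` are
coordinates on `𝔽_q²`, so `C_{a,α} C_{b,α}ᵀ = J`; moreover `C_{a,α} C_{a,α}ᵀ = q C_{a,0}`, and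
`∑ C_{a,0} = q I + J` because a nonzero vector lies on exactly one line through the origin.

Put `S_n = V^n + V^{-n}`. The values of `ψ` form a half-system modulo the odd number `2q + 3`, and
so do their doubles, hence `∑ S_{ψ a} = ∑ S_{2 ψ a} = J - I`. Together with `S_n² = S_{2n} + 2 I`,
expanding `N_α N_αᵀ` gives `2q J + q N' + 2q² I`, where `N'` is the matrix `N_0` built from `2ψ`
instead of `ψ`. This does not depend on `α`, and `N'` is the `(0,1)`-matrix `Y` of the Deza
condition.
-/

section CyclicShift

lemma sum_range_mul_of_periodic {M : Type*} [AddCommMonoid M] {f : ℕ → M} {m d : ℕ}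
    (hf : Function.Periodic f m) (hd : d.Coprime m) :
    ∑ n ∈ Finset.range m, f (d * n) = ∑ n ∈ Finset.range m, f n := by
  obtain rfl | hm := m.eq_zero_or_pos
  · simp
  have hmaps : Set.MapsTo (fun n => d * n % m) (Finset.range m) (Finset.range m) :=
    fun n _ => by simpa using Nat.mod_lt _ hm
  have hinj : Set.InjOn (fun n => d * n % m) (Finset.range m) := fun x hx y hy hxy =>
    (Nat.ModEq.cancel_left_of_coprime hd.symm hxy).eq_of_lt_of_lt (by simpa using hx)
      (by simpa using hy)
  exact Finset.sum_nbij _ hmaps hinj (Finset.surjOn_of_injOn_of_card_le _ hmaps hinj le_rfl)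
    fun n _ => (hf.map_mod_nat _).symm

lemma sum_Icc_pow_add_inv_pow {R : Type*} [Semiring R] {g h : R} {k : ℕ}
    (hgh : g * h = 1) (hg : g ^ (2 * k + 1) = 1) :
    ∑ n ∈ Finset.Icc 1 k, (g ^ n + h ^ n) + 1 = ∑ n ∈ Finset.range (2 * k + 1), g ^ n := by
  have hpow : ∀ n ∈ Finset.range k, h ^ (n + 1) = g ^ (k + (k - 1 - n) + 1) := by
    intro n hn
    rw [Finset.mem_range] at hn
    calc h ^ (n + 1) = g ^ (k + (k - 1 - n) + 1) * (g ^ (n + 1) * h ^ (n + 1)) := by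
          rw [← mul_assoc, ← pow_add, show k + (k - 1 - n) + 1 + (n + 1) = 2 * k + 1 by omega, hg,
            one_mul]
      _ = g ^ (k + (k - 1 - n) + 1) := by
          rw [pow_mul_pow_eq_one _ hgh, mul_one]
  rw [Finset.sum_range_succ', two_mul, Finset.sum_range_add, ← Finset.sum_range_reflect
    (fun n => g ^ (k + n + 1)), ← Finset.sum_congr rfl hpow, pow_zero, ← Finset.sum_add_distrib,
    Finset.range_eq_Ico, Finset.sum_Ico_add' (fun n => g ^ n + h ^ n) 0 k 1, zero_add]
  rfl

lemma shiftV_pow_apply {m : ℕ} (n : ℕ) (i j : Fin m) :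
    (shiftV m ^ n) i j = if (j : ℕ) = (i + n) % m then 1 else 0 := by
  induction n generalizing j with
  | zero => simp [Matrix.one_apply, Nat.mod_eq_of_lt i.isLt, Fin.ext_iff, eq_comm]
  | succ n ih =>
    have hmod : (i + n) % m < m := Nat.mod_lt _ i.pos
    rw [pow_succ, Matrix.mul_apply, Finset.sum_eq_single ⟨(i + n) % m, hmod⟩]
    · rw [ih, if_pos rfl, one_mul]
      simp [shiftV, add_assoc]
    · intro l _ hl
      rw [ih, if_neg (fun h => hl (Fin.ext h)), zero_mul]
    · simp

lemma shiftV_eq_permMatrix (m : ℕ) [NeZero m] :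
    shiftV m = (Equiv.addRight (1 : Fin m)).permMatrix ℤ := by
  ext i j
  simp [shiftV, PEquiv.toMatrix_apply, Fin.ext_iff, Fin.val_add, eq_comm]

lemma shiftV_mul_transpose (m : ℕ) [NeZero m] : shiftV m * (shiftV m)ᵀ = 1 := by
  rw [shiftV_eq_permMatrix, transpose_permMatrix, ← permMatrix_mul, inv_mul_cancel, permMatrix_one]

lemma shiftV_pow_self (m : ℕ) : shiftV m ^ m = 1 := by
  ext i j
  simp [shiftV_pow_apply, Matrix.one_apply, Nat.mod_eq_of_lt i.isLt, Fin.ext_iff, eq_comm]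

lemma sum_range_shiftV_pow (m : ℕ) :
    ∑ n ∈ Finset.range m, shiftV m ^ n = allOnes (Fin m) := by
  ext i j
  have : NeZero m := ⟨i.pos.ne'⟩
  have hiff (n : Fin m) : (j : ℕ) = (i + n) % m ↔ n = j - i := by
    rw [← Fin.val_add, ← Fin.ext_iff, eq_sub_iff_add_eq', eq_comm]
  simp only [Finset.sum_range, Matrix.sum_apply, shiftV_pow_apply, hiff, Finset.sum_ite_eq',
    Finset.mem_univ, if_true, allOnes, of_apply]

/-- The symmetrised power `V ^ n + V ^ (-n)` of the cyclic shift. -/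
def symShift (m n : ℕ) : Matrix (Fin m) (Fin m) ℤ := shiftV m ^ n + (shiftV m)ᵀ ^ n

lemma symShift_transpose (m n : ℕ) : (symShift m n)ᵀ = symShift m n := by
  rw [symShift, transpose_add, transpose_pow, transpose_pow, transpose_transpose, add_comm]

lemma symShift_nonneg (m n : ℕ) (i j : Fin m) : 0 ≤ symShift m n i j := by
  rw [symShift, ← transpose_pow, Matrix.add_apply, transpose_apply, shiftV_pow_apply,
    shiftV_pow_apply]
  positivity

lemma symShift_mul_self (m n : ℕ) [NeZero m] :
    symShift m n * symShift m n = symShift m (2 * n) + (2 : ℤ) • 1 := by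
  have hV : shiftV m ^ n * (shiftV m)ᵀ ^ n = 1 := pow_mul_pow_eq_one n (shiftV_mul_transpose m)
  have hV' : (shiftV m)ᵀ ^ n * shiftV m ^ n = 1 := mul_eq_one_comm.mp hV
  rw [symShift, symShift, add_mul, mul_add, mul_add, hV, hV', two_mul, pow_add, pow_add, two_smul]
  abel

lemma sum_symShift_mul_of_coprime {k d : ℕ} (hd : d.Coprime (2 * k + 1)) :
    ∑ n ∈ Finset.Icc 1 k, symShift (2 * k + 1) (d * n) = allOnes (Fin (2 * k + 1)) - 1 := by
  set V := shiftV (2 * k + 1)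
  have hV : V ^ (2 * k + 1) = 1 := shiftV_pow_self _
  have hperiodic : Function.Periodic (fun n => V ^ n) (2 * k + 1) := fun n => by
    simp only [pow_add _ n, hV, mul_one]
  rw [eq_sub_iff_add_eq, ← sum_range_shiftV_pow, ← sum_range_mul_of_periodic hperiodic hd]
  simp only [symShift, pow_mul]
  apply sum_Icc_pow_add_inv_pow (pow_mul_pow_eq_one d (shiftV_mul_transpose _))
  rw [pow_right_comm, hV, one_pow]

/-- A half-system modulo `m`: the residues `ψ a` and `-ψ a`, taken together, are the nonzero
residues modulo `m`, each occurring once. Encoded as an identity between shift matrices, which is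
the form in which half-systems enter the computation of `Nmat`. -/
def IsHalfSystem {ι : Type*} [Fintype ι] (m : ℕ) (ψ : ι → ℕ) : Prop :=
  ∑ a, symShift m (ψ a) = allOnes (Fin m) - 1

lemma isHalfSystem_mul_of_coprime {ι : Type*} [Fintype ι] {k d : ℕ} {ψ : ι → ℕ}
    (hcard : Fintype.card ι = k) (hmem : ∀ a, ψ a ∈ Finset.Icc 1 k)
    (hinj : Function.Injective ψ) (hd : d.Coprime (2 * k + 1)) :
    IsHalfSystem (2 * k + 1) fun a => d * ψ a := by
  rw [IsHalfSystem, ← sum_symShift_mul_of_coprime hd]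
  exact Finset.sum_nbij ψ (fun a _ => hmem a) hinj.injOn
    (Finset.surjOn_of_injOn_of_card_le ψ (fun a _ => hmem a) hinj.injOn (by simp [hcard]))
    fun _ _ => rfl

end CyclicShift

section AllOnes

lemma allOnes_mul_allOnes (ι : Type*) [Fintype ι] :
    allOnes ι * allOnes ι = (Fintype.card ι : ℤ) • allOnes ι := by
  ext
  simp [allOnes, Matrix.mul_apply]

lemma allOnes_transpose (ι : Type*) : (allOnes ι)ᵀ = allOnes ι := rfl

lemma allOnes_kronecker_allOnes (ι κ : Type*) : allOnes ι ⊗ₖ allOnes κ = allOnes (ι × κ) := by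
  ext
  simp [allOnes]

lemma IsZeroOne.nonneg {ι κ : Type*} {M : Matrix ι κ ℤ} (hM : IsZeroOne M) (i : ι) (j : κ) :
    0 ≤ M i j := by
  rcases hM i j with h | h <;> simp [h]

lemma IsZeroOne.le_one {ι κ : Type*} {M : Matrix ι κ ℤ} (hM : IsZeroOne M) (i : ι) (j : κ) :
    M i j ≤ 1 := by
  rcases hM i j with h | h <;> simp [h]

end AllOnes

section AuxiliaryMatrices

variable {F : Type*} [Field F]

/-- The linear functional on `F²` attached to a point of the projective line `F ∪ {y}`, with `none`
for `y`. Its level sets form a parallel class of lines, and `Cext F a α` is the matrix of the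
relation `slopeForm a (p - p') = α`. -/
def slopeForm : Option F → F × F →ₗ[F] F
  | some γ => LinearMap.snd F F F + γ • LinearMap.fst F F F
  | none => LinearMap.fst F F F

lemma slopeForm_prod_injective {a b : Option F} (hab : a ≠ b) :
    Function.Injective ((slopeForm a).prod (slopeForm b)) := by
  rw [← LinearMap.ker_eq_bot, LinearMap.ker_eq_bot']
  rintro ⟨x, y⟩ h
  obtain ⟨ha, hb⟩ := Prod.mk.inj h
  cases a with
  | none =>
    cases b with
    | none => exact absurd rfl hab
    | some γ => simp_all [slopeForm]
  | some γ =>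
    cases b with
    | none => simp_all [slopeForm]
    | some δ =>
      have hγδ : γ - δ ≠ 0 := sub_ne_zero.mpr fun h => hab (congrArg some h)
      simp only [slopeForm, LinearMap.add_apply, LinearMap.smul_apply, LinearMap.snd_apply,
        LinearMap.fst_apply, smul_eq_mul] at ha hb
      have hx : x = 0 := (mul_eq_zero_iff_left hγδ).mp (by linear_combination ha - hb)
      simp_all

lemma slopeForm_prod_bijective [Finite F] {a b : Option F} (hab : a ≠ b) :
    Function.Bijective fun w => (slopeForm a w, slopeForm b w) :=
  Finite.injective_iff_bijective.mp (slopeForm_prod_injective hab)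

lemma existsUnique_slopeForm_eq_zero {w : F × F} (hw : w ≠ 0) : ∃! a, slopeForm a w = 0 := by
  refine existsUnique_of_exists_of_unique ?_ fun a b ha hb => ?_
  · by_cases hx : w.1 = 0
    · exact ⟨none, hx⟩
    · exact ⟨some (-w.2 / w.1), by simp [slopeForm, hx]⟩
  · by_contra hab
    exact hw (slopeForm_prod_injective hab (by simp [ha, hb]))

variable [Fintype F] [DecidableEq F]

lemma sum_ite_slopeForm_eq (a : Option F) (c : F) :
    ∑ w, (if slopeForm a w = c then 1 else 0 : ℤ) = Fintype.card F := by
  obtain ⟨b, hb⟩ := exists_ne a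
  rw [(slopeForm_prod_bijective hb.symm).sum_comp
    fun z : F × F => if z.1 = c then (1 : ℤ) else 0, Fintype.sum_prod_type_right]
  simp

lemma sum_ite_slopeForm_eq_and_eq {a b : Option F} (hab : a ≠ b) (c d : F) :
    ∑ w, (if slopeForm a w = c ∧ slopeForm b w = d then 1 else 0 : ℤ) = 1 := by
  rw [(slopeForm_prod_bijective hab).sum_comp
    fun z : F × F => if z.1 = c ∧ z.2 = d then (1 : ℤ) else 0]
  simp [← Prod.ext_iff (y := (c, d))]

lemma Cext_apply (a : Option F) (α : F) (p p' : F × F) :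
    Cext F a α p p' = if slopeForm a (p - p') = α then 1 else 0 := by
  cases a with
  | none => simp [Cext, CyMat, slopeForm, phiMat, allOnes, sub_eq_iff_eq_add']
  | some γ =>
    simp only [Cext, Cmat, slopeForm, phiMat, Matrix.of_apply, LinearMap.add_apply,
      LinearMap.smul_apply, LinearMap.snd_apply, LinearMap.fst_apply, Prod.fst_sub, Prod.snd_sub,
      smul_eq_mul]
    refine if_congr ⟨fun h => ?_, fun h => ?_⟩ rfl rfl <;> linear_combination h

lemma isZeroOne_Cext (a : Option F) (α : F) : IsZeroOne (Cext F a α) := fun p p' => by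
  rw [Cext_apply]
  exact (ite_eq_or_eq _ _ _).symm

lemma Cext_transpose (a : Option F) (α : F) : (Cext F a α)ᵀ = Cext F a (-α) := by
  ext p p'
  rw [transpose_apply, Cext_apply, Cext_apply, ← neg_sub p p', map_neg]
  simp only [neg_eq_iff_eq_neg]

lemma Cext_mul_allOnes (a : Option F) (α : F) :
    Cext F a α * allOnes (F × F) = (Fintype.card F : ℤ) • allOnes (F × F) := by
  ext p p'
  simp only [Matrix.mul_apply, Cext_apply, allOnes, of_apply, mul_one, Matrix.smul_apply,
    smul_eq_mul]
  rw [← sum_ite_slopeForm_eq a α]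
  exact (Equiv.subLeft p).sum_comp fun w => if slopeForm a w = α then (1 : ℤ) else 0

lemma Cext_mul_transpose_self (a : Option F) (α β : F) :
    Cext F a α * (Cext F a β)ᵀ = (Fintype.card F : ℤ) • Cext F a (α - β) := by
  ext p p'
  have hentry (r : F × F) : Cext F a α p r * Cext F a β p' r =
      Cext F a (α - β) p p' * Cext F a α p r := by
    have hdiff : slopeForm a (p - r) = slopeForm a (p - p') + slopeForm a (p' - r) := by
      rw [← map_add, sub_add_sub_cancel]
    simp only [Cext_apply, hdiff]
    grind
  have hrow := congrFun₂ (Cext_mul_allOnes a α) p p'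
  simp only [Matrix.mul_apply, allOnes, of_apply, mul_one, Matrix.smul_apply, smul_eq_mul] at hrow
  simp only [Matrix.mul_apply, transpose_apply, hentry, ← Finset.mul_sum, hrow, Matrix.smul_apply,
    smul_eq_mul]
  exact mul_comm _ _

lemma Cext_mul_transpose_of_ne {a b : Option F} (hab : a ≠ b) (α β : F) :
    Cext F a α * (Cext F b β)ᵀ = allOnes (F × F) := by
  ext p p'
  have hentry (r : F × F) : Cext F a α p r * Cext F b β p' r =
      if slopeForm a r = slopeForm a p - α ∧ slopeForm b r = slopeForm b p' - β
        then 1 else 0 := by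
    simp only [Cext_apply, map_sub]
    grind
  simp only [Matrix.mul_apply, transpose_apply, hentry, sum_ite_slopeForm_eq_and_eq hab, allOnes,
    of_apply]

lemma sum_Cext_zero :
    ∑ a, Cext F a 0 = (Fintype.card F : ℤ) • 1 + allOnes (F × F) := by
  ext p p'
  simp only [Matrix.sum_apply, Cext_apply, Matrix.add_apply, Matrix.smul_apply, allOnes, of_apply]
  obtain rfl | hp := eq_or_ne p p'
  · simp
  · obtain ⟨a, ha, huniq⟩ := existsUnique_slopeForm_eq_zero (sub_ne_zero.mpr hp)
    have hiff (b : Option F) : slopeForm b (p - p') = 0 ↔ b = a :=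
      ⟨huniq b, fun h => h ▸ ha⟩
    simp only [hiff, Finset.sum_ite_eq', Finset.mem_univ, if_true, Matrix.one_apply_ne hp,
      smul_zero, zero_add]

end AuxiliaryMatrices

section KroneckerSum

variable {ι m n R : Type*} [Fintype ι]

lemma sum_kronecker [NonUnitalNonAssocSemiring R] (S : ι → Matrix m m R) (K : Matrix n n R) :
    (∑ a, S a) ⊗ₖ K = ∑ a, S a ⊗ₖ K := by
  ext
  simp [Matrix.sum_apply, Finset.sum_mul]

lemma kronecker_sum [NonUnitalNonAssocSemiring R] (K : Matrix m m R) (C : ι → Matrix n n R) :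
    K ⊗ₖ (∑ a, C a) = ∑ a, K ⊗ₖ C a := by
  ext
  simp [Matrix.sum_apply, Finset.mul_sum]

lemma sum_kronecker_mul_transpose [Fintype m] [Fintype n] [CommRing R] {S : ι → Matrix m m R}
    {C : ι → Matrix n n R} {K : Matrix n n R} (hC : ∀ a b, a ≠ b → C a * (C b)ᵀ = K) :
    (∑ a, S a ⊗ₖ C a) * (∑ a, S a ⊗ₖ C a)ᵀ =
      ∑ a, (S a * (S a)ᵀ) ⊗ₖ (C a * (C a)ᵀ - K) + ((∑ a, S a) * (∑ a, S a)ᵀ) ⊗ₖ K := by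
  classical
  have hCK (a b : ι) : C a * (C b)ᵀ = (if a = b then C a * (C a)ᵀ - K else 0) + K := by
    obtain rfl | hab := eq_or_ne a b
    · simp
    · simp [hab, hC]
  have hterm (a b : ι) : S a ⊗ₖ C a * (S b ⊗ₖ C b)ᵀ =
      (if a = b then (S a * (S a)ᵀ) ⊗ₖ (C a * (C a)ᵀ - K) else 0) + (S a * (S b)ᵀ) ⊗ₖ K := by
    rw [← kroneckerMap_transpose, ← mul_kronecker_mul, hCK, kronecker_add]
    split_ifs with hab
    · rw [hab]
    · rw [kronecker_zero]
  simp only [transpose_sum, Finset.sum_mul_sum, hterm, Finset.sum_add_distrib, sum_kronecker,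
    Finset.sum_ite_eq, Finset.mem_univ, if_true]

lemma sum_kronecker_nonneg {S : ι → Matrix m m ℤ} {C : ι → Matrix n n ℤ}
    (hS : ∀ a i j, 0 ≤ S a i j) (hC : ∀ a, IsZeroOne (C a)) (x y : m × n) :
    0 ≤ (∑ a, S a ⊗ₖ C a) x y := by
  rw [Matrix.sum_apply]
  exact Finset.sum_nonneg fun a _ => mul_nonneg (hS a _ _) ((hC a).nonneg _ _)

lemma sum_kronecker_le {S : ι → Matrix m m ℤ} {C : ι → Matrix n n ℤ}
    (hS : ∀ a i j, 0 ≤ S a i j) (hC : ∀ a, IsZeroOne (C a)) (x y : m × n) :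
    (∑ a, S a ⊗ₖ C a) x y ≤ (∑ a, S a) x.1 y.1 := by
  rw [Matrix.sum_apply, Matrix.sum_apply]
  exact Finset.sum_le_sum fun a _ => mul_le_of_le_one_right (hS a _ _) ((hC a).le_one _ _)

end KroneckerSum

section DezaGraph

variable {ι : Type*} [DecidableEq ι]

lemma IsZeroOne.allOnes_sub_sub_one {Y : Matrix ι ι ℤ} (hY : IsZeroOne Y)
    (hdiag : ∀ i, Y i i = 0) : IsZeroOne (allOnes ι - Y - 1) := by
  intro i j
  obtain rfl | hij := eq_or_ne i j
  · simp [allOnes, hdiag]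
  · rcases hY i j with h | h <;> simp [allOnes, h, hij]

variable [Fintype ι]

/-- `M` is the adjacency matrix of a Deza graph with parameters `(|ι|, k, b, a)`. -/
def IsDezaMatrix (M : Matrix ι ι ℤ) (k b a : ℤ) : Prop :=
  Mᵀ = M ∧ (∀ i, M i i = 0) ∧ IsZeroOne M ∧ M * allOnes ι = k • allOnes ι ∧
    ∃ X Y : Matrix ι ι ℤ, IsZeroOne X ∧ IsZeroOne Y ∧ X + Y + 1 = allOnes ι ∧
      M * M = a • X + b • Y + k • (1 : Matrix ι ι ℤ)

/-- `M` is the adjacency matrix of a directed Deza graph of type II with parameters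
`(|ι|, k, b, a)`. -/
def IsDirectedDezaMatrix (M : Matrix ι ι ℤ) (k b a : ℤ) : Prop :=
  IsZeroOne M ∧ M * allOnes ι = k • allOnes ι ∧ allOnes ι * M = k • allOnes ι ∧
    ∃ X Y : Matrix ι ι ℤ, IsZeroOne X ∧ IsZeroOne Y ∧ X + Y + 1 = allOnes ι ∧
      M * Mᵀ = a • X + b • Y + k • (1 : Matrix ι ι ℤ) ∧
      Mᵀ * M = a • X + b • Y + k • (1 : Matrix ι ι ℤ)

variable {M : Matrix ι ι ℤ} {k b a : ℤ}

lemma IsDirectedDezaMatrix.isDezaMatrix (hM : IsDirectedDezaMatrix M k b a) (hsymm : Mᵀ = M)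
    (hdiag : ∀ i, M i i = 0) : IsDezaMatrix M k b a := by
  obtain ⟨h01, hrow, -, X, Y, hX, hY, hXY, hmul, -⟩ := hM
  rw [hsymm] at hmul
  exact ⟨hsymm, hdiag, h01, hrow, X, Y, hX, hY, hXY, hmul⟩

lemma isDirectedDezaMatrix_of_mul_transpose {Y : Matrix ι ι ℤ} (hM : IsZeroOne M)
    (hrow : M * allOnes ι = k • allOnes ι) (hcol : allOnes ι * M = k • allOnes ι)
    (hY : IsZeroOne Y) (hdiag : ∀ i, Y i i = 0)
    (hmul : M * Mᵀ = a • allOnes ι + (b - a) • Y + (k - a) • (1 : Matrix ι ι ℤ))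
    (hcomm : Mᵀ * M = M * Mᵀ) : IsDirectedDezaMatrix M k b a := by
  have hsplit : M * Mᵀ = a • (allOnes ι - Y - 1) + b • Y + k • (1 : Matrix ι ι ℤ) := by
    rw [hmul]
    module
  exact ⟨hM, hrow, hcol, _, Y, hY.allOnes_sub_sub_one hdiag, hY, by abel, hsplit,
    hcomm.trans hsplit⟩

end DezaGraph

section Nmat

variable {F : Type*} [Field F] [Fintype F] [DecidableEq F] {ψ : Option F → ℕ}

local notation "q" => Fintype.card F

lemma Nmat_eq_sum_symShift (ψ : Option F → ℕ) (α : F) :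
    Nmat F ψ α = ∑ a, symShift (2 * q + 3) (ψ a) ⊗ₖ Cext F a α := rfl

lemma Nmat_transpose (ψ : Option F → ℕ) (α : F) : (Nmat F ψ α)ᵀ = Nmat F ψ (-α) := by
  simp only [Nmat_eq_sum_symShift, transpose_sum, ← kroneckerMap_transpose, symShift_transpose,
    Cext_transpose]

lemma isZeroOne_Nmat (hψ : IsHalfSystem (2 * q + 3) ψ)
    (α : F) : IsZeroOne (Nmat F ψ α) := fun x y => by
  have hnonneg : 0 ≤ Nmat F ψ α x y :=
    sum_kronecker_nonneg (fun _ => symShift_nonneg _ _) (isZeroOne_Cext · α) x y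
  have hle : Nmat F ψ α x y ≤ (allOnes (Fin (2 * q + 3)) - 1) x.1 y.1 :=
    hψ ▸ sum_kronecker_le (fun _ => symShift_nonneg _ _) (isZeroOne_Cext · α) x y
  have hle_one : (allOnes (Fin (2 * q + 3)) - 1) x.1 y.1 ≤ 1 := by
    simp only [Matrix.sub_apply, allOnes, of_apply, Matrix.one_apply]
    split_ifs <;> simp
  omega

lemma Nmat_apply_self (hψ : IsHalfSystem (2 * q + 3) ψ)
    (α : F) (x : Fin (2 * q + 3) × (F × F)) : Nmat F ψ α x x = 0 := by
  refine le_antisymm ?_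
    (sum_kronecker_nonneg (fun _ => symShift_nonneg _ _) (isZeroOne_Cext · α) x x)
  calc Nmat F ψ α x x ≤ (∑ a, symShift (2 * q + 3) (ψ a)) x.1 x.1 :=
        sum_kronecker_le (fun _ => symShift_nonneg _ _) (isZeroOne_Cext · α) x x
    _ = 0 := by rw [hψ]; simp [allOnes]

lemma Nmat_mul_allOnes (hψ : IsHalfSystem (2 * q + 3) ψ) (α : F) :
    Nmat F ψ α * allOnes _ = (2 * (q : ℤ) ^ 2 + 2 * (q : ℤ)) • allOnes _ := by
  have hS : (∑ a, symShift (2 * q + 3) (ψ a)) * allOnes _ = (2 * (q : ℤ) + 2) • allOnes _ := by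
    rw [hψ, sub_mul, allOnes_mul_allOnes, one_mul, Fintype.card_fin]
    push_cast
    module
  rw [Nmat_eq_sum_symShift, ← allOnes_kronecker_allOnes]
  simp only [Finset.sum_mul, ← mul_kronecker_mul, Cext_mul_allOnes]
  rw [← sum_kronecker, ← Finset.sum_mul, hS, kronecker_smul, smul_kronecker, smul_smul]
  ring_nf

lemma allOnes_mul_Nmat (hψ : IsHalfSystem (2 * q + 3) ψ) (α : F) :
    allOnes _ * Nmat F ψ α = (2 * (q : ℤ) ^ 2 + 2 * (q : ℤ)) • allOnes _ := by
  have h := congrArg transpose (Nmat_mul_allOnes hψ (-α))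
  rwa [transpose_mul, Nmat_transpose, neg_neg, transpose_smul, allOnes_transpose] at h

lemma sum_symShift_mul_self_kronecker (hψ₂ : IsHalfSystem (2 * q + 3) fun a => 2 * ψ a) (α : F) :
    ∑ a, (symShift (2 * q + 3) (ψ a) * (symShift (2 * q + 3) (ψ a))ᵀ) ⊗ₖ
        (Cext F a α * (Cext F a α)ᵀ - allOnes (F × F)) =
      (q : ℤ) • Nmat F (fun a => 2 * ψ a) 0 - (allOnes (Fin (2 * q + 3)) - 1) ⊗ₖ allOnes (F × F) +
        (2 * (q : ℤ) ^ 2) • 1 - (2 : ℤ) • (1 ⊗ₖ allOnes (F × F)) := by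
  have hterm (a : Option F) :
      (symShift (2 * q + 3) (ψ a) * (symShift (2 * q + 3) (ψ a))ᵀ) ⊗ₖ
          (Cext F a α * (Cext F a α)ᵀ - allOnes (F × F)) =
        (q : ℤ) • (symShift (2 * q + 3) (2 * ψ a) ⊗ₖ Cext F a 0) -
          symShift (2 * q + 3) (2 * ψ a) ⊗ₖ allOnes (F × F) +
          (2 * (q : ℤ)) • (1 ⊗ₖ Cext F a 0) - (2 : ℤ) • (1 ⊗ₖ allOnes (F × F)) := by
    rw [symShift_transpose, symShift_mul_self, Cext_mul_transpose_self, sub_self, sub_eq_add_neg,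
      ← neg_one_smul ℤ (allOnes (F × F))]
    simp only [add_kronecker, kronecker_add, smul_kronecker, kronecker_smul]
    module
  simp only [hterm, Finset.sum_add_distrib, Finset.sum_sub_distrib, ← Finset.smul_sum,
    ← sum_kronecker, ← kronecker_sum, ← Nmat_eq_sum_symShift, sum_Cext_zero, kronecker_add,
    kronecker_smul, one_kronecker_one, Finset.sum_const, Finset.card_univ, Fintype.card_option]
  rw [hψ₂]
  module

lemma Nmat_mul_transpose (hψ : IsHalfSystem (2 * q + 3) ψ)
    (hψ₂ : IsHalfSystem (2 * q + 3) fun a => 2 * ψ a) (α : F) :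
    Nmat F ψ α * (Nmat F ψ α)ᵀ = (2 * (q : ℤ)) • allOnes _ +
      (q : ℤ) • Nmat F (fun a => 2 * ψ a) 0 + (2 * (q : ℤ) ^ 2) • 1 := by
  have hsq : (allOnes (Fin (2 * q + 3)) - 1) * (allOnes (Fin (2 * q + 3)) - 1)ᵀ =
      (2 * (q : ℤ)) • allOnes (Fin (2 * q + 3)) + (allOnes (Fin (2 * q + 3)) - 1) +
        (2 : ℤ) • 1 := by
    rw [transpose_sub, allOnes_transpose, transpose_one, sub_mul, mul_sub, allOnes_mul_allOnes,
      Fintype.card_fin, mul_one, one_mul]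
    push_cast
    module
  rw [Nmat_eq_sum_symShift ψ, sum_kronecker_mul_transpose fun a b hab =>
    Cext_mul_transpose_of_ne hab α α, sum_symShift_mul_self_kronecker hψ₂, hψ, hsq, add_kronecker,
    add_kronecker, smul_kronecker, smul_kronecker, allOnes_kronecker_allOnes]
  module

lemma Nmat_transpose_mul (hψ : IsHalfSystem (2 * q + 3) ψ)
    (hψ₂ : IsHalfSystem (2 * q + 3) fun a => 2 * ψ a) (α : F) :
    (Nmat F ψ α)ᵀ * Nmat F ψ α = Nmat F ψ α * (Nmat F ψ α)ᵀ := by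
  have h := Nmat_mul_transpose hψ hψ₂ (-α)
  rwa [← Nmat_mul_transpose hψ hψ₂ α, Nmat_transpose, neg_neg, ← Nmat_transpose ψ α] at h

end Nmat

theorem Nmat_deza_general (F : Type*) [Field F] [Fintype F] [DecidableEq F] (ψ : Option F → ℕ)
    (hmem : ∀ a, ψ a ∈ Finset.Icc 1 (Fintype.card F + 1)) (hinj : Function.Injective ψ) :
    IsDezaMatrix (Nmat F ψ 0) (2 * (Fintype.card F : ℤ) ^ 2 + 2 * (Fintype.card F : ℤ))
        (3 * (Fintype.card F : ℤ)) (2 * (Fintype.card F : ℤ)) ∧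
      ∀ α, IsDirectedDezaMatrix (Nmat F ψ α)
        (2 * (Fintype.card F : ℤ) ^ 2 + 2 * (Fintype.card F : ℤ))
        (3 * (Fintype.card F : ℤ)) (2 * (Fintype.card F : ℤ)) := by
  have hmul {d : ℕ} (hd : d.Coprime (2 * Fintype.card F + 3)) :
      IsHalfSystem (2 * Fintype.card F + 3) fun a => d * ψ a :=
    isHalfSystem_mul_of_coprime Fintype.card_option hmem hinj hd
  have hψ : IsHalfSystem (2 * Fintype.card F + 3) ψ := by
    simpa only [one_mul] using hmul (Nat.coprime_one_left _)
  have hψ₂ : IsHalfSystem (2 * Fintype.card F + 3) fun a => 2 * ψ a :=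
    hmul (Nat.coprime_two_left.mpr ⟨Fintype.card F + 1, by ring⟩)
  have hdirected (α : F) := isDirectedDezaMatrix_of_mul_transpose (isZeroOne_Nmat hψ α)
    (Nmat_mul_allOnes hψ α) (allOnes_mul_Nmat hψ α) (isZeroOne_Nmat hψ₂ 0) (Nmat_apply_self hψ₂ 0)
    (a := 2 * (Fintype.card F : ℤ)) (b := 3 * (Fintype.card F : ℤ))
    (by rw [Nmat_mul_transpose hψ hψ₂]; module) (Nmat_transpose_mul hψ hψ₂ α)
  exact ⟨(hdirected 0).isDezaMatrix (by rw [Nmat_transpose, neg_zero]) (Nmat_apply_self hψ 0),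
    hdirected⟩

/-- N_0 is the adjacency matrix of a Deza graph with parameters
(q²(2q+3), 2q²+2q, 3q, 2q), and for α ≠ 0, N_α is the adjacency matrix of a directed
(q²(2q+3), 2q²+2q, 3q, 2q)-Deza graph of type II. -/
theorem Nmat_deza (F : Type*) [Field F] [Fintype F] [DecidableEq F]
    (hodd : Odd (Fintype.card F))
    (ψ : Option F → ℕ)
    (hmem : ∀ a, ψ a ∈ Finset.Icc 1 (Fintype.card F + 1))
    (hinj : Function.Injective ψ) :
    -- (1) N_0 is the adjacency matrix of a Deza graph
    ((Nmat F ψ 0)ᵀ = Nmat F ψ 0 ∧ (∀ i, Nmat F ψ 0 i i = 0) ∧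
      IsZeroOne (Nmat F ψ 0) ∧
      Nmat F ψ 0 * allOnes (Fin (2 * Fintype.card F + 3) × (F × F)) =
        (2 * (Fintype.card F : ℤ) ^ 2 + 2 * (Fintype.card F : ℤ)) •
          allOnes (Fin (2 * Fintype.card F + 3) × (F × F)) ∧
      ∃ X Y : Matrix (Fin (2 * Fintype.card F + 3) × (F × F))
          (Fin (2 * Fintype.card F + 3) × (F × F)) ℤ,
        IsZeroOne X ∧ IsZeroOne Y ∧
        X + Y + 1 = allOnes (Fin (2 * Fintype.card F + 3) × (F × F)) ∧
        Nmat F ψ 0 * Nmat F ψ 0 =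
          (2 * (Fintype.card F : ℤ)) • X + (3 * (Fintype.card F : ℤ)) • Y +
          (2 * (Fintype.card F : ℤ) ^ 2 + 2 * (Fintype.card F : ℤ)) •
            (1 : Matrix (Fin (2 * Fintype.card F + 3) × (F × F))
              (Fin (2 * Fintype.card F + 3) × (F × F)) ℤ)) ∧
    -- (2) for α ≠ 0, N_α is the adjacency matrix of a directed Deza graph of type II
    (∀ α : F, α ≠ 0 →
      IsZeroOne (Nmat F ψ α) ∧
      Nmat F ψ α * allOnes (Fin (2 * Fintype.card F + 3) × (F × F)) =
        (2 * (Fintype.card F : ℤ) ^ 2 + 2 * (Fintype.card F : ℤ)) •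
          allOnes (Fin (2 * Fintype.card F + 3) × (F × F)) ∧
      allOnes (Fin (2 * Fintype.card F + 3) × (F × F)) * Nmat F ψ α =
        (2 * (Fintype.card F : ℤ) ^ 2 + 2 * (Fintype.card F : ℤ)) •
          allOnes (Fin (2 * Fintype.card F + 3) × (F × F)) ∧
      ∃ X Y : Matrix (Fin (2 * Fintype.card F + 3) × (F × F))
          (Fin (2 * Fintype.card F + 3) × (F × F)) ℤ,
        IsZeroOne X ∧ IsZeroOne Y ∧
        X + Y + 1 = allOnes (Fin (2 * Fintype.card F + 3) × (F × F)) ∧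
        Nmat F ψ α * (Nmat F ψ α)ᵀ =
          (2 * (Fintype.card F : ℤ)) • X + (3 * (Fintype.card F : ℤ)) • Y +
          (2 * (Fintype.card F : ℤ) ^ 2 + 2 * (Fintype.card F : ℤ)) •
            (1 : Matrix (Fin (2 * Fintype.card F + 3) × (F × F))
              (Fin (2 * Fintype.card F + 3) × (F × F)) ℤ) ∧
        (Nmat F ψ α)ᵀ * Nmat F ψ α =
          (2 * (Fintype.card F : ℤ)) • X + (3 * (Fintype.card F : ℤ)) • Y +
          (2 * (Fintype.card F : ℤ) ^ 2 + 2 * (Fintype.card F : ℤ)) •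
            (1 : Matrix (Fin (2 * Fintype.card F + 3) × (F × F))
              (Fin (2 * Fintype.card F + 3) × (F × F)) ℤ)) :=
  (Nmat_deza_general F ψ hmem hinj).imp_right fun hdirected α _ => hdirected α
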